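/- Let w₁, w₂ > 0 and 0 < a < (w₁+w₂)/2, and define G₂(a,w,t) = e^{(w₁+w₂−a)t}/((e^{w₁t}−1)(e^{w₂t}−1)) − 1/(w₁w₂t²) for t > 0. Then there exists exactly one σ in the open interval (1,2) such that ∫₀^∞ G₂(a,w,t) t^{σ−1} dt = 0. -/

import Mathlib

open MeasureTheory Real Set

/-- The Barnes `G₂` kernel:
`G₂(a, w, t) = e^{(w₁+w₂−a)t}/((e^{w₁t}−1)(e^{w₂t}−1)) − 1/(w₁w₂t²)`. -/
noncomputable def G₂ (a w₁ w₂ t : ℝ) : ℝ :=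
  Real.exp ((w₁ + w₂ - a) * t) / ((Real.exp (w₁ * t) - 1) * (Real.exp (w₂ * t) - 1))
    - 1 / (w₁ * w₂ * t ^ 2)

/-!
With `Td x = x / (1 - e⁻ˣ)` one has
`1 + w₁ w₂ t² G₂(t) = e⁻ᵃᵗ Td(w₁ t) Td(w₂ t) = e^{t R(t)}`.
Since `log Td` is strictly concave and vanishes at `0`, the rate `R` is strictly decreasing; it
falls from `(w₁ + w₂) / 2 - a > 0` to `-a < 0`, so `G₂` changes sign exactly once, from `+` to `-`,
at some `t₀`.

Let `M` be the Mellin transform of `G₂`. For `σ < τ` the integrand of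
`t₀^{-σ} M(σ) - t₀^{-τ} M(τ)` is `G₂(t) ((t/t₀)^σ - (t/t₀)^τ) / t ≥ 0`, so `t₀^{-σ} M(σ)` is
strictly decreasing and `M` has at most one zero. It has one because `G₂ ~ c / t` at `0`, with
`c > 0`, and `G₂ ~ -1 / (w₁ w₂ t²)` at `∞` force `M → +∞` at `1` and `M → -∞` at `2`.
-/

open Filter Asymptotics
open scoped Topology

/-- The Mellin transform of a real function at a real argument. -/
noncomputable def realMellin (g : ℝ → ℝ) (σ : ℝ) : ℝ :=
  ∫ t in Ioi (0 : ℝ), g t * t ^ (σ - 1)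

/-- Absolute convergence of the integral defining `realMellin g σ`. -/
def RealMellinConvergent (g : ℝ → ℝ) (σ : ℝ) : Prop :=
  IntegrableOn (fun t => g t * t ^ (σ - 1)) (Ioi 0)

section RealMellin

variable {g : ℝ → ℝ} {α β σ p b t₀ K L : ℝ}

lemma cpow_sub_one_smul_ofReal (g : ℝ → ℝ) (σ : ℝ) {t : ℝ} (ht : 0 < t) :
    (t : ℂ) ^ ((σ : ℂ) - 1) • (g t : ℂ) = ((g t * t ^ (σ - 1) : ℝ) : ℂ) := by
  rw [smul_eq_mul, mul_comm, Complex.ofReal_mul, Complex.ofReal_cpow ht.le]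
  push_cast
  rfl

lemma mellin_ofReal (g : ℝ → ℝ) (σ : ℝ) :
    mellin (fun t => (g t : ℂ)) σ = realMellin g σ := by
  rw [mellin, realMellin, ← integral_complex_ofReal]
  exact setIntegral_congr_fun measurableSet_Ioi fun t ht => cpow_sub_one_smul_ofReal g σ ht

lemma mellinConvergent_ofReal :
    MellinConvergent (fun t => (g t : ℂ)) σ ↔ RealMellinConvergent g σ := by
  have h : EqOn (fun t : ℝ => (t : ℂ) ^ ((σ : ℂ) - 1) • (g t : ℂ))
      (fun t => ((g t * t ^ (σ - 1) : ℝ) : ℂ)) (Ioi 0) :=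
    fun t ht => cpow_sub_one_smul_ofReal g σ ht
  rw [MellinConvergent, integrableOn_congr_fun h measurableSet_Ioi]
  exact ⟨Integrable.re, Integrable.ofReal⟩

lemma realMellin_comp_inv (g : ℝ → ℝ) (σ : ℝ) :
    realMellin (fun t => g t⁻¹) σ = realMellin g (-σ) := by
  have h := mellin_comp_inv (fun t => (g t : ℂ)) σ
  rw [← Complex.ofReal_neg, mellin_ofReal (fun t => g t⁻¹), mellin_ofReal g] at h
  exact_mod_cast h

lemma realMellinConvergent_comp_inv :
    RealMellinConvergent (fun t => g t⁻¹) σ ↔ RealMellinConvergent g (-σ) := by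
  have h := MellinConvergent.comp_rpow (f := fun t => (g t : ℂ)) (s := σ) (a := -1) (by norm_num)
  rw [← mellinConvergent_ofReal, ← mellinConvergent_ofReal]
  simpa [rpow_neg_one, div_neg] using h

lemma realMellin_neg (g : ℝ → ℝ) (σ : ℝ) :
    realMellin (fun t => -g t) σ = -realMellin g σ := by
  simp only [realMellin, neg_mul, integral_neg]

lemma RealMellinConvergent.neg (h : RealMellinConvergent g σ) :
    RealMellinConvergent (fun t => -g t) σ := by
  simpa [RealMellinConvergent] using! Integrable.neg h

lemma isBigO_rpow_neg_of_tendsto {l : Filter ℝ} (hl : ∀ᶠ t in l, 0 < t)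
    (h : Tendsto (fun t => t ^ α * g t) l (𝓝 L)) : g =O[l] (· ^ (-α)) := by
  refine isBigO_of_div_tendsto_nhds ?_ L (h.congr' ?_)
  · filter_upwards [hl] with t ht h0 using absurd h0 (rpow_pos_of_pos ht _).ne'
  · filter_upwards [hl] with t ht
    rw [Pi.div_apply, rpow_neg ht.le, div_inv_eq_mul, mul_comm]

lemma realMellinConvergent_of_isBigO (hg : LocallyIntegrableOn g (Ioi 0))
    (h0 : g =O[𝓝[>] 0] (· ^ (-α))) (hα : α < σ)
    (htop : g =O[atTop] (· ^ (-β))) (hβ : σ < β) : RealMellinConvergent g σ := by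
  simpa only [RealMellinConvergent, mul_comm] using
    mellin_convergent_of_isBigO_scalar hg htop hβ h0 hα

lemma continuousAt_realMellin_of_isBigO (hg : LocallyIntegrableOn g (Ioi 0))
    (h0 : g =O[𝓝[>] 0] (· ^ (-α))) (hα : α < σ)
    (htop : g =O[atTop] (· ^ (-β))) (hβ : σ < β) : ContinuousAt (realMellin g) σ := by
  have hd : DifferentiableAt ℂ (mellin fun t => (g t : ℂ)) σ :=
    mellin_differentiableAt_of_isBigO_rpow (a := β) (b := α)
      (fun t ht => let ⟨s, hs, hi⟩ := hg t ht; ⟨s, hs, hi.ofReal⟩)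
      (Complex.isBigO_ofReal_left.2 htop) (by simpa using hβ)
      (Complex.isBigO_ofReal_left.2 h0) (by simpa using hα)
  have hre : realMellin g = fun s : ℝ => (mellin (fun t => (g t : ℂ)) s).re := by
    funext s
    rw [mellin_ofReal, Complex.ofReal_re]
  rw [hre]
  exact Complex.continuous_re.continuousAt.comp
    (hd.continuousAt.comp Complex.continuous_ofReal.continuousAt)

lemma rpow_neg_mul_realMellin_lt {x y : ℝ} (ht₀ : 0 < t₀)
    (hpos : ∀ t ∈ Ioo 0 t₀, 0 < g t) (hneg : ∀ t ∈ Ioi t₀, g t < 0) (hxy : x < y)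
    (hx : RealMellinConvergent g x) (hy : RealMellinConvergent g y) :
    t₀ ^ (-y) * realMellin g y < t₀ ^ (-x) * realMellin g x := by
  set f : ℝ → ℝ := fun t => t₀ ^ (-x) * (g t * t ^ (x - 1)) - t₀ ^ (-y) * (g t * t ^ (y - 1))
    with hf
  have hfac : ∀ t, 0 < t → f t = g t * ((t / t₀) ^ x - (t / t₀) ^ y) / t := by
    intro t ht
    simp only [hf, rpow_sub_one ht.ne', div_rpow ht.le ht₀.le, rpow_neg ht₀.le]
    ring
  have hfpos : ∀ t, 0 < t → t ≠ t₀ → 0 < f t := by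
    intro t ht hne
    rw [hfac t ht]
    rcases hne.lt_or_gt with h | h
    · have := rpow_lt_rpow_of_exponent_gt (div_pos ht ht₀) ((div_lt_one ht₀).2 h) hxy
      exact div_pos (mul_pos (hpos t ⟨ht, h⟩) (sub_pos.2 this)) ht
    · have := rpow_lt_rpow_of_exponent_lt ((one_lt_div ht₀).2 h) hxy
      exact div_pos (mul_pos_of_neg_of_neg (hneg t h) (sub_neg.2 this)) ht
  have hfnonneg : 0 ≤ᵐ[volume.restrict (Ioi 0)] f := by
    refine (ae_restrict_mem measurableSet_Ioi).mono fun t ht => ?_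
    rcases eq_or_ne t t₀ with rfl | hne
    · simp [hfac t ht, ht₀.ne']
    · exact (hfpos t ht hne).le
  have hint : 0 < ∫ t in Ioi 0, f t := by
    rw [setIntegral_pos_iff_support_of_nonneg_ae hfnonneg
      ((hx.const_mul _).sub (hy.const_mul _))]
    refine lt_of_lt_of_le (by simp) (measure_mono (s := Ioi t₀) fun t ht => ?_)
    exact ⟨(hfpos t (ht₀.trans ht) (ne_of_gt ht)).ne', ht₀.trans ht⟩
  rwa [hf, integral_sub (hx.const_mul _) (hy.const_mul _), integral_const_mul,
    integral_const_mul, sub_pos] at hint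

lemma RealMellinConvergent.abs (h : RealMellinConvergent g σ) :
    RealMellinConvergent (fun t => |g t|) σ :=
  IntegrableOn.congr_fun (Integrable.norm h) (fun t ht => by
    simp [abs_of_nonneg (rpow_nonneg (le_of_lt ht) (σ - 1))]) measurableSet_Ioi

lemma setIntegral_Ioc_rpow_sub_one {s : ℝ} (hb : 0 ≤ b) (hs : 0 < s) :
    ∫ t in Ioc 0 b, t ^ (s - 1) = b ^ s / s := by
  rw [← intervalIntegral.integral_of_le hb, integral_rpow (Or.inl (by linarith)),
    sub_add_cancel, zero_rpow hs.ne', sub_zero]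

lemma integrableOn_Ioc_rpow_sub_one {s : ℝ} (hb : 0 ≤ b) (hs : 0 < s) :
    IntegrableOn (fun t => t ^ (s - 1)) (Ioc 0 b) :=
  (intervalIntegrable_iff_integrableOn_Ioc_of_le hb).1
    (intervalIntegral.intervalIntegrable_rpow' (by linarith))

lemma mul_rpow_add_mul_abs_mul_rpow_nonneg {t : ℝ} (y : ℝ) (hb : 0 < b) (hbt : b ≤ t)
    (hσp : σ ≤ p) : 0 ≤ y * t ^ (σ - 1) + b ^ (σ - p) * (|y| * t ^ (p - 1)) := by
  have ht : 0 < t := hb.trans_le hbt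
  have hpow : t ^ (σ - 1) ≤ b ^ (σ - p) * t ^ (p - 1) := by
    rw [show σ - 1 = (σ - p) + (p - 1) by ring, rpow_add ht]
    exact mul_le_mul_of_nonneg_right (rpow_le_rpow_of_nonpos hb hbt (sub_nonpos.2 hσp))
      (rpow_nonneg ht.le _)
  have habs := mul_le_mul_of_nonneg_right (neg_abs_le y) (rpow_nonneg ht.le (σ - 1))
  linarith [mul_le_mul_of_nonneg_left hpow (abs_nonneg y)]

-- Past `b` the second term on the right compensates a possibly negative `g`, which leaves only the
-- head `∫₀ᵇ K t ^ (σ - α - 1)`.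
lemma mul_rpow_div_le_realMellin_add (hK : 0 ≤ K) (hb : 0 < b) (hασ : α < σ) (hσp : σ ≤ p)
    (hσ : RealMellinConvergent g σ) (hp : RealMellinConvergent g p)
    (hg : ∀ t ∈ Ioc 0 b, K ≤ t ^ α * g t) :
    K * (b ^ (σ - α) / (σ - α)) ≤
      realMellin g σ + b ^ (σ - p) * realMellin (fun t => |g t|) p := by
  set f : ℝ → ℝ := fun t => g t * t ^ (σ - 1) + b ^ (σ - p) * (|g t| * t ^ (p - 1)) with hf
  have hfint : IntegrableOn f (Ioi 0) := hσ.add (hp.abs.const_mul _)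
  have hhead : ∀ t ∈ Ioc 0 b, K * t ^ (σ - α - 1) ≤ f t := by
    rintro t ⟨ht, htb⟩
    have h := mul_le_mul_of_nonneg_right (hg t ⟨ht, htb⟩) (rpow_nonneg ht.le (σ - α - 1))
    rw [mul_right_comm, ← rpow_add ht, mul_comm (t ^ _) (g t),
      show α + (σ - α - 1) = σ - 1 by ring] at h
    exact h.trans (le_add_of_nonneg_right (by positivity))
  have hnonneg : 0 ≤ᵐ[volume.restrict (Ioi 0)] f := by
    refine (ae_restrict_mem measurableSet_Ioi).mono fun t (ht : 0 < t) => ?_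
    rcases le_total t b with h | h
    · exact (by positivity : 0 ≤ K * t ^ (σ - α - 1)).trans (hhead t ⟨ht, h⟩)
    · exact mul_rpow_add_mul_abs_mul_rpow_nonneg (g t) hb h hσp
  have hσα : 0 < σ - α := sub_pos.2 hασ
  calc K * (b ^ (σ - α) / (σ - α)) = ∫ t in Ioc 0 b, K * t ^ (σ - α - 1) := by
        rw [integral_const_mul, setIntegral_Ioc_rpow_sub_one hb.le hσα]
    _ ≤ ∫ t in Ioc 0 b, f t :=
        setIntegral_mono_on ((integrableOn_Ioc_rpow_sub_one hb.le hσα).const_mul K)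
          (hfint.mono_set Ioc_subset_Ioi_self) measurableSet_Ioc hhead
    _ ≤ ∫ t in Ioi 0, f t :=
        setIntegral_mono_set hfint hnonneg Ioc_subset_Ioi_self.eventuallyLE
    _ = realMellin g σ + b ^ (σ - p) * realMellin (fun t => |g t|) p := by
        rw [hf, integral_add hσ (hp.abs.const_mul _), integral_const_mul, realMellin, realMellin]

lemma tendsto_realMellin_nhdsGT_atTop (hαp : α < p) (hK : 0 < K)
    (hconv : ∀ σ ∈ Ioc α p, RealMellinConvergent g σ)
    (hg : ∀ᶠ t in 𝓝[>] 0, K ≤ t ^ α * g t) :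
    Tendsto (realMellin g) (𝓝[>] α) atTop := by
  obtain ⟨b, hb, hbK⟩ := mem_nhdsGT_iff_exists_Ioc_subset.1 hg
  have hb : 0 < b := hb
  have hpow (c : ℝ) : Tendsto (fun σ => b ^ (σ - c)) (𝓝[>] α) (𝓝 (b ^ (α - c))) :=
    ((continuousAt_const_rpow hb.ne').tendsto.comp
      (tendsto_id.sub_const c)).mono_left nhdsWithin_le_nhds
  have hinv : Tendsto (fun σ => (σ - α)⁻¹) (𝓝[>] α) atTop := by
    refine tendsto_inv_nhdsGT_zero.comp (tendsto_nhdsWithin_iff.2 ⟨?_, ?_⟩)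
    · exact ((continuous_sub_right α).tendsto' α 0 (sub_self α)).mono_left nhdsWithin_le_nhds
    · filter_upwards [self_mem_nhdsWithin] with σ (hσ : α < σ) using sub_pos.2 hσ
  have hmain : Tendsto (fun σ => K * (b ^ (σ - α) / (σ - α))) (𝓝[>] α) atTop :=
    ((hpow α).pos_mul_atTop (by positivity) hinv).const_mul_atTop hK
  refine tendsto_atTop_mono' _ ?_ (hmain.atTop_add
    ((hpow p).mul_const (-realMellin (fun t => |g t|) p)))
  filter_upwards [Ioc_mem_nhdsGT hαp] with σ hσ
  linarith [mul_rpow_div_le_realMellin_add hK.le hb hσ.1 hσ.2 (hconv σ hσ)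
    (hconv p ⟨hαp, le_rfl⟩) hbK]

lemma tendsto_realMellin_nhdsLT_atBot (hpβ : p < β) (hL : L < 0)
    (hconv : ∀ σ ∈ Ico p β, RealMellinConvergent g σ)
    (hg : ∀ᶠ t in atTop, t ^ β * g t ≤ L) :
    Tendsto (realMellin g) (𝓝[<] β) atBot := by
  have h : Tendsto (realMellin fun t => -g t⁻¹) (𝓝[>] (-β)) atTop := by
    refine tendsto_realMellin_nhdsGT_atTop (neg_lt_neg hpβ) (neg_pos.2 hL)
      (fun σ hσ => (realMellinConvergent_comp_inv.2
        (hconv (-σ) ⟨le_neg_of_le_neg hσ.2, neg_lt.1 hσ.1⟩)).neg) ?_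
    filter_upwards [tendsto_inv_nhdsGT_zero.eventually hg, self_mem_nhdsWithin] with t ht ht0
    rw [inv_rpow (le_of_lt ht0), ← rpow_neg (le_of_lt ht0)] at ht
    linarith
  refine tendsto_neg_atTop_iff.1 ((h.comp tendsto_neg_nhdsLT).congr fun σ => ?_)
  simp only [Function.comp_apply, realMellin_neg (fun t => g t⁻¹), realMellin_comp_inv, neg_neg]

theorem existsUnique_realMellin_eq_zero (hαβ : α < β) (hg : LocallyIntegrableOn g (Ioi 0))
    (hK : 0 < K) (h0 : Tendsto (fun t => t ^ α * g t) (𝓝[>] 0) (𝓝 K))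
    (hL : L < 0) (htop : Tendsto (fun t => t ^ β * g t) atTop (𝓝 L))
    (ht₀ : 0 < t₀) (hpos : ∀ t ∈ Ioo 0 t₀, 0 < g t) (hneg : ∀ t ∈ Ioi t₀, g t < 0) :
    ∃! σ, σ ∈ Ioo α β ∧ realMellin g σ = 0 := by
  have hO0 : g =O[𝓝[>] 0] (· ^ (-α)) := isBigO_rpow_neg_of_tendsto self_mem_nhdsWithin h0
  have hOtop : g =O[atTop] (· ^ (-β)) := isBigO_rpow_neg_of_tendsto (eventually_gt_atTop 0) htop
  have hconv (σ) (hσ : σ ∈ Ioo α β) : RealMellinConvergent g σ :=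
    realMellinConvergent_of_isBigO hg hO0 hσ.1 hOtop hσ.2
  have hcont : ContinuousOn (realMellin g) (Ioo α β) := fun σ hσ =>
    (continuousAt_realMellin_of_isBigO hg hO0 hσ.1 hOtop hσ.2).continuousWithinAt
  have hanti : StrictAntiOn (fun σ => t₀ ^ (-σ) * realMellin g σ) (Ioo α β) :=
    fun x hx y hy hxy => rpow_neg_mul_realMellin_lt ht₀ hpos hneg hxy (hconv x hx) (hconv y hy)
  obtain ⟨p, hαp, hpβ⟩ := exists_between hαβ
  have hα : Tendsto (realMellin g) (𝓝[>] α) atTop :=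
    tendsto_realMellin_nhdsGT_atTop hαp (half_pos hK)
      (fun σ hσ => hconv σ ⟨hσ.1, hσ.2.trans_lt hpβ⟩)
      (h0.eventually_const_le (half_lt_self hK))
  have hβ : Tendsto (realMellin g) (𝓝[<] β) atBot :=
    tendsto_realMellin_nhdsLT_atBot hpβ (by linarith : L / 2 < 0)
      (fun σ hσ => hconv σ ⟨hαp.trans_le hσ.1, hσ.2⟩)
      (htop.eventually_le_const (by linarith))
  obtain ⟨σ, hσ, hσ0⟩ : ∃ σ ∈ Ioo α β, realMellin g σ = 0 :=
    isPreconnected_Ioo.intermediate_value_Iii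
      (le_principal_iff.2 (Ioo_mem_nhdsLT hαβ)) (le_principal_iff.2 (Ioo_mem_nhdsGT hαβ))
      hcont hβ hα (mem_univ 0)
  exact ⟨σ, ⟨hσ, hσ0⟩, fun τ ⟨hτ, hτ0⟩ => hanti.injOn hτ hσ (by simp only [hσ0, hτ0, mul_zero])⟩

end RealMellin

/-- The logarithm of the Todd function `x / (1 - e⁻ˣ)`. At `x = 0` the conventions `0 / 0 = 0` and
`log 0 = 0` give the correct limiting value `0`. -/
noncomputable def logTodd (x : ℝ) : ℝ := log (x / (1 - exp (-x)))

section LogTodd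

variable {x : ℝ}

lemma logTodd_zero : logTodd 0 = 0 := by simp [logTodd]

lemma one_sub_exp_neg_pos (hx : 0 < x) : 0 < 1 - exp (-x) := by simpa using hx

lemma exp_sub_one_ne_zero (hx : x ≠ 0) : exp x - 1 ≠ 0 := by simpa [sub_eq_zero] using hx

lemma one_sub_exp_neg_ne_zero (hx : x ≠ 0) : 1 - exp (-x) ≠ 0 := by
  rw [← neg_sub]
  exact neg_ne_zero.2 (exp_sub_one_ne_zero (neg_ne_zero.2 hx))

lemma exp_logTodd (hx : 0 < x) : exp (logTodd x) = x / (1 - exp (-x)) :=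
  exp_log (div_pos hx (one_sub_exp_neg_pos hx))

lemma mul_exp_neg_half_lt_one_sub_exp_neg (hx : 0 < x) : x * exp (-x / 2) < 1 - exp (-x) := by
  have h := self_lt_sinh_iff.2 (half_pos hx)
  have h1 : exp (x / 2) * exp (-x / 2) = 1 := by rw [← exp_add]; simp [neg_div]
  have h2 : exp (-x / 2) * exp (-x / 2) = exp (-x) := by rw [← exp_add]; ring_nf
  rw [sinh_eq, ← neg_div] at h
  nlinarith [mul_lt_mul_of_pos_right h (exp_pos (-x / 2))]

lemma logTodd_le_half (hx : 0 ≤ x) : logTodd x ≤ x / 2 := by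
  rcases hx.eq_or_lt with rfl | hx
  · simp [logTodd_zero]
  · have h : exp (x / 2) * exp (-x / 2) = 1 := by rw [← exp_add]; simp [neg_div]
    rw [← exp_le_exp, exp_logTodd hx, div_le_iff₀ (one_sub_exp_neg_pos hx)]
    nlinarith [mul_lt_mul_of_pos_left (mul_exp_neg_half_lt_one_sub_exp_neg hx) (exp_pos (x / 2))]

lemma two_div_one_add_exp_neg_le (hx : 0 < x) :
    2 / (1 + exp (-x)) ≤ x / (1 - exp (-x)) := by
  have h := le_log_one_add_of_nonneg (sub_nonneg.2 (one_le_exp hx.le))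
  rw [add_sub_cancel, log_exp, show exp x - 1 + 2 = exp x + 1 by ring,
    div_le_iff₀ (by positivity)] at h
  have h1 : exp x * exp (-x) = 1 := by rw [← exp_add]; simp
  rw [div_le_div_iff₀ (by positivity) (one_sub_exp_neg_pos hx)]
  nlinarith [mul_le_mul_of_nonneg_right h (exp_pos (-x)).le]

lemma one_sub_exp_neg_div_two_le_logTodd (hx : 0 ≤ x) : (1 - exp (-x)) / 2 ≤ logTodd x := by
  rcases hx.eq_or_lt with rfl | hx
  · simp [logTodd_zero]
  · calc (1 - exp (-x)) / 2 = 1 - (2 / (1 + exp (-x)))⁻¹ := by field_simp; ring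
      _ ≤ log (2 / (1 + exp (-x))) := one_sub_inv_le_log_of_pos (by positivity)
      _ ≤ logTodd x := log_le_log (by positivity) (two_div_one_add_exp_neg_le hx)

lemma hasDerivAt_logTodd (hx : x ≠ 0) :
    HasDerivAt logTodd (1 / x - 1 / (exp x - 1)) x := by
  have hne := one_sub_exp_neg_ne_zero hx
  have hexp : HasDerivAt (fun y => 1 - exp (-y)) (exp (-x)) x := by
    simpa using (hasDerivAt_neg x).exp.const_sub 1
  convert! ((hasDerivAt_id x).fun_div hexp hne).log (div_ne_zero hx hne) using 1
  have h := exp_sub_one_ne_zero hx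
  have h1 : exp (-x) = (exp x)⁻¹ := exp_neg x
  rw [h1] at hne ⊢
  simp only [id]
  field_simp

lemma continuousOn_logTodd : ContinuousOn logTodd (Ici 0) := by
  intro x hx
  rcases (show 0 ≤ x from hx).eq_or_lt with rfl | hx
  · have hlow : Tendsto (fun y : ℝ => (1 - exp (-y)) / 2) (𝓝[≥] 0) (𝓝 0) :=
      (Continuous.tendsto' (by fun_prop) 0 0 (by simp)).mono_left nhdsWithin_le_nhds
    have hupp : Tendsto (fun y : ℝ => y / 2) (𝓝[≥] 0) (𝓝 0) :=
      (Continuous.tendsto' (by fun_prop) 0 0 (by simp)).mono_left nhdsWithin_le_nhds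
    rw [ContinuousWithinAt, logTodd_zero]
    exact tendsto_of_tendsto_of_tendsto_of_le_of_le' hlow hupp
      (eventually_mem_nhdsWithin.mono fun _ => one_sub_exp_neg_div_two_le_logTodd)
      (eventually_mem_nhdsWithin.mono fun _ => logTodd_le_half)
  · exact (hasDerivAt_logTodd hx.ne').continuousAt.continuousWithinAt

lemma deriv2_logTodd (hx : x ≠ 0) :
    deriv^[2] logTodd x = exp x / (exp x - 1) ^ 2 - 1 / x ^ 2 := by
  have hderiv : deriv logTodd =ᶠ[𝓝 x] fun y => 1 / y - 1 / (exp y - 1) := by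
    filter_upwards [isOpen_ne.mem_nhds hx] with y hy using (hasDerivAt_logTodd hy).deriv
  have h := exp_sub_one_ne_zero hx
  have hd := ((hasDerivAt_id x).fun_inv hx).sub (((hasDerivAt_exp x).sub_const 1).fun_inv h)
  simp only [Function.iterate_succ, Function.iterate_zero, Function.comp_apply, id]
  rw [hderiv.deriv_eq]
  simp only [one_div]
  refine hd.deriv.trans ?_
  simp only [id]
  ring

lemma strictConcaveOn_logTodd : StrictConcaveOn ℝ (Ici 0) logTodd := by
  refine strictConcaveOn_of_deriv2_neg (convex_Ici 0) continuousOn_logTodd fun x hx => ?_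
  rw [interior_Ici] at hx
  have hx : 0 < x := hx
  have hsq : x ^ 2 * exp (-x) < (1 - exp (-x)) ^ 2 := by
    have h : exp (-x) = exp (-x / 2) ^ 2 := by rw [← exp_nat_mul]; ring_nf
    calc x ^ 2 * exp (-x) = (x * exp (-x / 2)) ^ 2 := by rw [mul_pow, ← h]
      _ < (1 - exp (-x)) ^ 2 := by
        gcongr
        exact mul_exp_neg_half_lt_one_sub_exp_neg hx
  have hexp : exp x / (exp x - 1) ^ 2 = exp (-x) / (1 - exp (-x)) ^ 2 := by
    have h := exp_sub_one_ne_zero hx.ne'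
    have hne := one_sub_exp_neg_ne_zero hx.ne'
    rw [exp_neg] at hne ⊢
    field_simp
  have hpos := one_sub_exp_neg_pos hx
  rw [deriv2_logTodd hx.ne', sub_neg, hexp, div_lt_div_iff₀ (by positivity) (by positivity)]
  linarith

lemma strictAntiOn_logTodd_div_self : StrictAntiOn (fun x => logTodd x / x) (Ioi 0) := by
  intro x hx y hy hxy
  simpa [logTodd_zero] using strictConcaveOn_logTodd.secant_strict_mono self_mem_Ici
    (Ioi_subset_Ici_self hx) (Ioi_subset_Ici_self hy) (ne_of_gt hx) (ne_of_gt hy) hxy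

lemma continuousOn_logTodd_div_self : ContinuousOn (fun x => logTodd x / x) (Ioi 0) :=
  (continuousOn_logTodd.mono Ioi_subset_Ici_self).div continuousOn_id fun _ hx => ne_of_gt hx

lemma tendsto_logTodd_div_self_nhdsGT :
    Tendsto (fun x => logTodd x / x) (𝓝[>] 0) (𝓝 (1 / 2)) := by
  have hlow : Tendsto (fun x : ℝ => (1 - exp (-x)) / 2 / x) (𝓝[>] 0) (𝓝 (1 / 2)) := by
    have hd : HasDerivAt (fun x => (1 - exp (-x)) / 2) (1 / 2) 0 := by
      simpa using ((hasDerivAt_neg (0 : ℝ)).exp.const_sub 1).div_const 2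
    simpa [div_eq_inv_mul] using hd.tendsto_slope_zero_right
  refine tendsto_of_tendsto_of_tendsto_of_le_of_le' hlow tendsto_const_nhds ?_ ?_
  · filter_upwards [self_mem_nhdsWithin] with x (hx : 0 < x)
    gcongr
    exact one_sub_exp_neg_div_two_le_logTodd hx.le
  · filter_upwards [self_mem_nhdsWithin] with x (hx : 0 < x)
    rw [div_le_iff₀ hx]
    linarith [logTodd_le_half hx.le]

lemma tendsto_logTodd_div_self_atTop : Tendsto (fun x => logTodd x / x) atTop (𝓝 0) := by
  have hlog : Tendsto (fun x : ℝ => log x / x) atTop (𝓝 0) :=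
    isLittleO_log_id_atTop.tendsto_div_nhds_zero
  have hden : Tendsto (fun x : ℝ => log (1 - exp (-x))) atTop (𝓝 0) := by
    have h : Tendsto (fun x : ℝ => 1 - exp (-x)) atTop (𝓝 1) := by
      simpa using tendsto_exp_neg_atTop_nhds_zero.const_sub 1
    simpa using h.log one_ne_zero
  have h := hlog.sub (hden.div_atTop tendsto_id)
  rw [sub_zero] at h
  refine h.congr' ?_
  filter_upwards [eventually_gt_atTop 0] with x hx
  rw [logTodd, log_div hx.ne' (one_sub_exp_neg_ne_zero hx.ne'), sub_div, id]

end LogTodd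

/-- The exponential rate of the normalised Barnes kernel: it is defined so that
`1 + w₁ w₂ t² G₂(a, w, t) = e^{t · G₂Rate(a, w, t)}`. -/
noncomputable def G₂Rate (a w₁ w₂ t : ℝ) : ℝ :=
  w₁ * (logTodd (w₁ * t) / (w₁ * t)) + w₂ * (logTodd (w₂ * t) / (w₂ * t)) - a

section Barnes

variable {a w₁ w₂ t : ℝ}

lemma strictAntiOn_G₂Rate (hw₁ : 0 < w₁) (hw₂ : 0 < w₂) :
    StrictAntiOn (G₂Rate a w₁ w₂) (Ioi 0) := by
  intro s (hs : 0 < s) t (ht : 0 < t) hst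
  have h {w : ℝ} (hw : 0 < w) : logTodd (w * t) / (w * t) < logTodd (w * s) / (w * s) :=
    strictAntiOn_logTodd_div_self (mul_pos hw hs) (mul_pos hw ht) (by gcongr)
  simp only [G₂Rate]
  linarith [mul_lt_mul_of_pos_left (h hw₁) hw₁, mul_lt_mul_of_pos_left (h hw₂) hw₂]

lemma continuousOn_G₂Rate (hw₁ : 0 < w₁) (hw₂ : 0 < w₂) :
    ContinuousOn (G₂Rate a w₁ w₂) (Ioi 0) := by
  have h {w : ℝ} (hw : 0 < w) : ContinuousOn (fun t => logTodd (w * t) / (w * t)) (Ioi 0) :=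
    continuousOn_logTodd_div_self.comp (by fun_prop) fun t ht => mul_pos hw ht
  exact (((h hw₁).const_mul w₁).add ((h hw₂).const_mul w₂)).sub continuousOn_const

lemma tendsto_G₂Rate_nhdsGT (a : ℝ) (hw₁ : 0 < w₁) (hw₂ : 0 < w₂) :
    Tendsto (G₂Rate a w₁ w₂) (𝓝[>] 0) (𝓝 ((w₁ + w₂) / 2 - a)) := by
  have h {w : ℝ} (hw : 0 < w) :
      Tendsto (fun t => logTodd (w * t) / (w * t)) (𝓝[>] 0) (𝓝 (1 / 2)) := by
    refine tendsto_logTodd_div_self_nhdsGT.comp (tendsto_nhdsWithin_iff.2 ⟨?_, ?_⟩)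
    · exact (Continuous.tendsto' (by fun_prop) 0 0 (by simp)).mono_left nhdsWithin_le_nhds
    · filter_upwards [self_mem_nhdsWithin] with t ht using mul_pos hw ht
  convert! (((h hw₁).const_mul w₁).add ((h hw₂).const_mul w₂)).sub_const a using 2
  ring

lemma tendsto_G₂Rate_atTop (a : ℝ) (hw₁ : 0 < w₁) (hw₂ : 0 < w₂) :
    Tendsto (G₂Rate a w₁ w₂) atTop (𝓝 (-a)) := by
  have h {w : ℝ} (hw : 0 < w) : Tendsto (fun t => logTodd (w * t) / (w * t)) atTop (𝓝 0) :=
    tendsto_logTodd_div_self_atTop.comp (tendsto_id.const_mul_atTop hw)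
  simpa using! (((h hw₁).const_mul w₁).add ((h hw₂).const_mul w₂)).sub_const a

lemma exists_G₂Rate_eq_zero (hw₁ : 0 < w₁) (hw₂ : 0 < w₂) (ha : 0 < a)
    (ha' : a < (w₁ + w₂) / 2) : ∃ t₀ > 0, G₂Rate a w₁ w₂ t₀ = 0 :=
  isPreconnected_Ioi.intermediate_value_Ioo (le_principal_iff.2 (Ioi_mem_atTop 0))
    (l₂ := 𝓝[>] 0) (le_principal_iff.2 self_mem_nhdsWithin) (continuousOn_G₂Rate hw₁ hw₂)
    (tendsto_G₂Rate_atTop a hw₁ hw₂)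
    (tendsto_G₂Rate_nhdsGT a hw₁ hw₂) ⟨neg_lt_zero.2 ha, sub_pos.2 ha'⟩

lemma G₂_eq_exp_G₂Rate (a : ℝ) (hw₁ : 0 < w₁) (hw₂ : 0 < w₂) (ht : 0 < t) :
    G₂ a w₁ w₂ t = (exp (t * G₂Rate a w₁ w₂ t) - 1) / (w₁ * w₂ * t ^ 2) := by
  have hrate : t * G₂Rate a w₁ w₂ t = logTodd (w₁ * t) + logTodd (w₂ * t) - a * t := by
    unfold G₂Rate
    field_simp
  have htodd {w : ℝ} (hw : 0 < w) : exp (logTodd (w * t)) / (w * t) =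
      exp (w * t) / (exp (w * t) - 1) := by
    have hwt : 0 < w * t := mul_pos hw ht
    have h := one_sub_exp_neg_ne_zero hwt.ne'
    have h' := exp_sub_one_ne_zero hwt.ne'
    rw [exp_logTodd hwt]
    rw [exp_neg] at h ⊢
    field_simp
  have hprod : exp (t * G₂Rate a w₁ w₂ t) / (w₁ * w₂ * t ^ 2) =
      exp ((w₁ + w₂ - a) * t) / ((exp (w₁ * t) - 1) * (exp (w₂ * t) - 1)) := by
    calc exp (t * G₂Rate a w₁ w₂ t) / (w₁ * w₂ * t ^ 2)
        = exp (logTodd (w₁ * t)) / (w₁ * t) * (exp (logTodd (w₂ * t)) / (w₂ * t)) *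
            exp (-(a * t)) := by
          rw [hrate, sub_eq_add_neg, exp_add, exp_add]
          field_simp
      _ = exp ((w₁ + w₂ - a) * t) / ((exp (w₁ * t) - 1) * (exp (w₂ * t) - 1)) := by
          rw [htodd hw₁, htodd hw₂, div_mul_div_comm, div_mul_eq_mul_div, ← exp_add, ← exp_add]
          ring_nf
  rw [G₂, sub_div, hprod]

lemma G₂_pos_iff (hw₁ : 0 < w₁) (hw₂ : 0 < w₂) (ht : 0 < t) :
    0 < G₂ a w₁ w₂ t ↔ 0 < G₂Rate a w₁ w₂ t := by
  rw [G₂_eq_exp_G₂Rate a hw₁ hw₂ ht, div_pos_iff_of_pos_right (by positivity), sub_pos,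
    one_lt_exp_iff, mul_pos_iff_of_pos_left ht]

lemma G₂_neg_iff (hw₁ : 0 < w₁) (hw₂ : 0 < w₂) (ht : 0 < t) :
    G₂ a w₁ w₂ t < 0 ↔ G₂Rate a w₁ w₂ t < 0 := by
  rw [G₂_eq_exp_G₂Rate a hw₁ hw₂ ht, div_lt_iff₀ (by positivity), zero_mul, sub_neg, exp_lt_one_iff]
  simp only [mul_neg_iff, ht, ht.not_gt, true_and, false_and, or_false]

lemma continuousOn_G₂ (a : ℝ) (hw₁ : 0 < w₁) (hw₂ : 0 < w₂) :
    ContinuousOn (G₂ a w₁ w₂) (Ioi 0) := by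
  have h {w : ℝ} (hw : 0 < w) : ∀ t ∈ Ioi (0 : ℝ), exp (w * t) - 1 ≠ 0 := fun t ht =>
    exp_sub_one_ne_zero (mul_pos hw ht).ne'
  unfold G₂
  refine .sub (.div (by fun_prop) (by fun_prop) fun t ht => mul_ne_zero (h hw₁ t ht) (h hw₂ t ht))
    (.div (by fun_prop) (by fun_prop) fun t (ht : 0 < t) => by positivity)

lemma tendsto_mul_G₂_nhdsGT (a : ℝ) (hw₁ : 0 < w₁) (hw₂ : 0 < w₂) :
    Tendsto (fun t => t * G₂ a w₁ w₂ t) (𝓝[>] 0)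
      (𝓝 (((w₁ + w₂) / 2 - a) / (w₁ * w₂))) := by
  have hR := tendsto_G₂Rate_nhdsGT a hw₁ hw₂
  have htR : Tendsto (fun t => t * G₂Rate a w₁ w₂ t) (𝓝[>] 0) (𝓝 0) := by
    simpa using! (tendsto_id.mono_left nhdsWithin_le_nhds).mul hR
  have hexp : Tendsto (dslope exp 0) (𝓝 0) (𝓝 1) := by
    simpa using (continuousAt_dslope_same.2 differentiableAt_exp).tendsto (x := (0 : ℝ))
  have h := (hR.mul (hexp.comp htR)).div_const (w₁ * w₂)
  rw [mul_one] at h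
  refine h.congr' ?_
  filter_upwards [self_mem_nhdsWithin] with t (ht : 0 < t)
  have hslope := sub_smul_dslope exp 0 (t * G₂Rate a w₁ w₂ t)
  rw [sub_zero, exp_zero, smul_eq_mul] at hslope
  rw [G₂_eq_exp_G₂Rate a hw₁ hw₂ ht, ← hslope, Function.comp_apply]
  field_simp

lemma tendsto_sq_mul_G₂_atTop (hw₁ : 0 < w₁) (hw₂ : 0 < w₂) (ha : 0 < a) :
    Tendsto (fun t => t ^ 2 * G₂ a w₁ w₂ t) atTop (𝓝 (-1 / (w₁ * w₂))) := by
  have htR : Tendsto (fun t => t * G₂Rate a w₁ w₂ t) atTop atBot :=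
    tendsto_id.atTop_mul_neg (neg_lt_zero.2 ha) (tendsto_G₂Rate_atTop a hw₁ hw₂)
  have h := ((tendsto_exp_atBot.comp htR).sub_const 1).div_const (w₁ * w₂)
  rw [zero_sub] at h
  refine h.congr' ?_
  filter_upwards [eventually_gt_atTop 0] with t ht
  rw [G₂_eq_exp_G₂Rate a hw₁ hw₂ ht, Function.comp_apply]
  field_simp

end Barnes

theorem stmt2 (w₁ w₂ a : ℝ) (hw₁ : 0 < w₁) (hw₂ : 0 < w₂)
    (ha : 0 < a) (ha' : a < (w₁ + w₂) / 2) :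
    ∃! σ : ℝ, σ ∈ Set.Ioo (1 : ℝ) 2 ∧
      ∫ t in Set.Ioi (0 : ℝ), G₂ a w₁ w₂ t * t ^ (σ - 1) = 0 := by
  obtain ⟨t₀, ht₀, hzero⟩ := exists_G₂Rate_eq_zero hw₁ hw₂ ha ha'
  have hanti := strictAntiOn_G₂Rate (a := a) hw₁ hw₂
  have hpos : ∀ t ∈ Ioo 0 t₀, 0 < G₂ a w₁ w₂ t := fun t ht =>
    (G₂_pos_iff hw₁ hw₂ ht.1).2 (hzero ▸ hanti ht.1 ht₀ ht.2)
  have hneg : ∀ t ∈ Ioi t₀, G₂ a w₁ w₂ t < 0 := fun t ht =>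
    have ht_pos : 0 < t := lt_trans ht₀ ht
    (G₂_neg_iff hw₁ hw₂ ht_pos).2 (hzero ▸ hanti ht₀ ht_pos ht)
  have hw : 0 < w₁ * w₂ := mul_pos hw₁ hw₂
  exact existsUnique_realMellin_eq_zero one_lt_two
    ((continuousOn_G₂ a hw₁ hw₂).locallyIntegrableOn measurableSet_Ioi)
    (div_pos (sub_pos.2 ha') hw)
    (by simpa only [rpow_one] using tendsto_mul_G₂_nhdsGT a hw₁ hw₂)
    (div_neg_of_neg_of_pos neg_one_lt_zero hw)
    (by simpa only [rpow_two] using tendsto_sq_mul_G₂_atTop hw₁ hw₂ ha)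
    ht₀ hpos hneg
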